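/- arXiv:2206.04408 — 2 statements merged into one kernel-verified Lean document; each statement's English description precedes it below -/
import Mathlib

section
/- Let q ≥ 2, n ≥ 2, and gcd(d,q) = 1, and let o_n = (O,0^n) be the generalized prefer-opposite sequence. Then the n-words occurring as contiguous windows of o_n are exactly all of A^n except the q−1 constant words 1^n, 2^n, …, (q−1)^n, and each occurring n-word occurs exactly once. -/
/-!
View the `n`-words as the edges of the de Bruijn graph on the `(n-1)`-words. A greedy sequence is a
trail in this graph, so along it every vertex is entered as often as it is left, except at the two
ends. The greedy rule takes an edge `v x` only after all edges out of `v` preferred to it.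

The trail can only halt at a vertex all of whose out-edges are used, and by balance this is the
vertex `0^(n-1)` where it started. For `a ≠ 0` the loop `a^n`, the least preferred edge at
`a^(n-1)`, would be taken only when all other out-edges of `a^(n-1)` are used, which balance forbids
in the same way.

Call a vertex saturated if all its out-edges other than loops are used; by balance its in-edges
other than loops are then used as well. Suppose that `a^(n-1)` is saturated. At a vertex ending in
`a` the edge that repeats `a` is the least preferred one, so if it is used, the vertex is saturated.
Following such edges backwards from `a^(n-1)`, all vertices ending in `a` are saturated. In
particular the edge `(a+d)^(n-1) a` is used, and as only the loop at `(a+d)^(n-1)` is less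
preferred, `(a+d)^(n-1)` is saturated. Starting from `a^(n-1) = 0^(n-1)`, where the sequence halts,
this reaches every digit, since `d` is a unit modulo `q`.
-/

namespace PaperDB

/-- The last `s` entries of `l`. -/
def lastN {α : Type*} (s : ℕ) (l : List α) : List α := l.drop (l.length - s)

/-- The digit appended by the greedy rule, if any: the most preferred digit `c`
(according to the preference function `P`, evaluated at the last `s` digits,
`P x 0` being the most preferred digit) such that the `n`-window created by
appending `c` has not yet occurred as a contiguous subword. -/
def nextDigit (q s n : ℕ) (P : List (ZMod q) → Fin q → ZMod q)
    (l : List (ZMod q)) : Option (ZMod q) :=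
  ((List.finRange q).map (fun i => P (lastN s l) i)).find?
    (fun c => !decide ((lastN (n - 1) l ++ [c]) <:+: l))

/-- Fuel-bounded greedy extension. -/
def greedyAux (q s n : ℕ) (P : List (ZMod q) → Fin q → ZMod q) :
    ℕ → List (ZMod q) → List (ZMod q)
  | 0, l => l
  | f + 1, l =>
    match nextDigit q s n P l with
    | none => l
    | some c => greedyAux q s n P f (l ++ [c])

/-- The greedy sequence `(P, I)`: fuel `q ^ n` provably suffices for the
construction to halt, since every `n`-word occurs at most once. -/
def greedy (q s n : ℕ) (P : List (ZMod q) → Fin q → ZMod q)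
    (I : List (ZMod q)) : List (ZMod q) :=
  greedyAux q s n P (q ^ n) I

/-- The number of occurrences of `w` as a length-`n` contiguous window of `l`. -/
def windowCount (q n : ℕ) (w l : List (ZMod q)) : ℕ :=
  ((List.range (l.length + 1 - n)).filter
    (fun i => decide ((l.drop i).take n = w))).length

/-- `P` is a preference function (of span `s`): it assigns to every `s`-word a
permutation of the alphabet `ZMod q`. -/
def IsPrefFun (q s : ℕ) (P : List (ZMod q) → Fin q → ZMod q) : Prop :=
  ∀ x : List (ZMod q), x.length = s → Function.Bijective (P x)

/-- The generalized prefer-opposite preference function `O^{(q,d)}`, of span 1: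
`O_j(a) = a + j·d (mod q)` for `j = 1,…,q`; the `Fin q`-index `j` denotes column `j+1`. -/
def OprefL (q d : ℕ) : List (ZMod q) → Fin q → ZMod q :=
  fun x j => x.headI + (((j : ℕ) + 1 : ℕ) : ZMod q) * (d : ZMod q)

/-- The generalized prefer-opposite sequence `o_n = (O, 0^n)`. -/
def oSeq (q n d : ℕ) : List (ZMod q) :=
  greedy q 1 n (OprefL q d) (List.replicate n 0)

section Lists

variable {α : Type*}

theorem length_lastN {s : ℕ} {l : List α} (h : s ≤ l.length) : (lastN s l).length = s := by
  simp only [lastN, List.length_drop]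
  omega

theorem lastN_lastN {s m : ℕ} {l : List α} (hsm : s ≤ m) (hm : m ≤ l.length) :
    lastN s (lastN m l) = lastN s l := by
  simp only [lastN, List.drop_drop, List.length_drop]
  congr 1
  omega

theorem lastN_replicate {s m : ℕ} (h : s ≤ m) (a : α) :
    lastN s (List.replicate m a) = List.replicate s a := by
  rw [lastN, List.drop_replicate, List.length_replicate, Nat.sub_sub_self h]

theorem lastN_append (u v : List α) : lastN v.length (u ++ v) = v := by
  simp [lastN]

theorem lastN_concat {m : ℕ} {l : List α} (c : α) (h : m ≤ l.length) :
    lastN m (l ++ [c]) = (lastN m l ++ [c]).tail := by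
  rw [lastN, lastN, ← List.drop_one, ← List.drop_append_of_le_length (Nat.sub_le _ _),
    List.drop_drop, List.length_append, List.length_singleton]
  congr 1
  omega

theorem lastN_one_append_replicate (u : List α) (k : ℕ) (a : α) :
    lastN 1 (u ++ List.replicate (k + 1) a) = [a] := by
  rw [List.replicate_succ', ← List.append_assoc]
  exact lastN_append _ [a]

theorem cons_eq_concat_iff {x : α} {v : List α} :
    x :: v = v ++ [x] ↔ v = List.replicate v.length x := by
  induction v with
  | nil => simp
  | cons y v ih =>
    rw [List.cons_append, List.cons.injEq, List.length_cons, List.replicate_succ, List.cons.injEq,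
      ← ih]
    constructor
    · rintro ⟨rfl, h⟩
      exact ⟨rfl, h⟩
    · rintro ⟨rfl, h⟩
      exact ⟨rfl, h⟩

theorem cons_ne_replicate_of_cons_ne_concat {x : α} {v : List α} (h : x :: v ≠ v ++ [x]) (n : ℕ)
    (a : α) : x :: v ≠ List.replicate n a := by
  intro heq
  obtain ⟨rfl, hv⟩ := List.forall_mem_cons.1 (List.eq_replicate_iff.1 heq).2
  exact h (cons_eq_concat_iff.2 (List.eq_replicate_of_mem hv))

theorem infix_iff_exists_take_drop {w l : List α} :
    w <:+: l ↔ ∃ i < l.length + 1 - w.length, (l.drop i).take w.length = w := by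
  constructor
  · rintro ⟨s, t, rfl⟩
    refine ⟨s.length, ?_, by simp⟩
    simp only [List.length_append]
    omega
  · rintro ⟨i, -, h⟩
    rw [← h]
    exact (List.take_prefix _ _).isInfix.trans (List.drop_suffix _ _).isInfix

end Lists

section WindowCount

variable {q m : ℕ} {w l : List (ZMod q)}

theorem windowCount_eq_card (n : ℕ) (w l : List (ZMod q)) :
    windowCount q n w l =
      (Finset.filter (fun i => (l.drop i).take n = w) (Finset.range (l.length + 1 - n))).card :=
  rfl

theorem windowCount_pos_iff {n : ℕ} (hw : w.length = n) :
    0 < windowCount q n w l ↔ w <:+: l := by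
  subst hw
  rw [windowCount_eq_card, Finset.card_pos, infix_iff_exists_take_drop]
  simp [Finset.Nonempty]

theorem windowCount_of_length_lt {n : ℕ} (h : l.length < n) : windowCount q n w l = 0 := by
  simp [windowCount, Nat.sub_eq_zero_of_le h]

theorem windowCount_concat (c : ZMod q) (h : m ≤ l.length) :
    windowCount q (m + 1) w (l ++ [c]) =
      windowCount q (m + 1) w l + if w = lastN m l ++ [c] then 1 else 0 := by
  have hold : ∀ i ∈ Finset.range (l.length - m),
      ((l ++ [c]).drop i).take (m + 1) = (l.drop i).take (m + 1) := by
    intro i hi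
    rw [Finset.mem_range] at hi
    rw [List.drop_append_of_le_length (by omega), List.take_append_of_le_length]
    rw [List.length_drop]
    omega
  have hnew : ((l ++ [c]).drop (l.length - m)).take (m + 1) = lastN m l ++ [c] := by
    rw [List.drop_append_of_le_length (Nat.sub_le _ _), List.take_of_length_le, lastN]
    simp only [List.length_append, List.length_drop, List.length_singleton]
    omega
  have hlen : (l ++ [c]).length + 1 - (m + 1) = l.length - m + 1 := by
    rw [List.length_append, List.length_singleton]
    omega
  simp only [windowCount_eq_card, Finset.card_filter, hlen, Finset.sum_range_succ, hnew,
    Nat.add_sub_add_right, eq_comm (a := w)]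
  congr 1
  exact Finset.sum_congr rfl fun i hi => by rw [hold i hi]

theorem infix_concat_iff_eq_or_isInfix {c : ZMod q} (hw : w.length = m + 1) (h : m ≤ l.length) :
    w <:+: l ++ [c] ↔ w = lastN m l ++ [c] ∨ w <:+: l := by
  rw [← windowCount_pos_iff hw, ← windowCount_pos_iff hw, windowCount_concat c h]
  split_ifs with hwc <;> simp [hwc]

end WindowCount

section Trail

variable {q m : ℕ} {l t v : List (ZMod q)}

/-- `l` is a trail in the de Bruijn graph, whose vertices are the `m`-words and whose edges are the
`(m + 1)`-words, the word `x v y` being an edge from `x v` to `v y`: no edge is used twice. -/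
def IsTrail (m : ℕ) (l : List (ZMod q)) : Prop :=
  ∀ w, windowCount q (m + 1) w l ≤ 1

/-- A trail in the de Bruijn graph on the `m`-words that ends at the vertex where it started. -/
structure IsClosedTrail (m : ℕ) (l : List (ZMod q)) : Prop where
  isTrail : IsTrail m l
  le_length : m ≤ l.length
  lastN_isPrefix : lastN m l <+: l

/-- Every edge of the de Bruijn graph out of the vertex `v`, except possibly a loop, is used
by `l`. The edge `v x` is a loop if and only if `x v = v x`. -/
def IsSaturated (l v : List (ZMod q)) : Prop :=
  ∀ x, x :: v ≠ v ++ [x] → v ++ [x] <:+: l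

theorem IsSaturated.windowCount_cons_le (hs : IsSaturated l v) (hl : IsTrail m l)
    (hv : v.length = m) {x : ZMod q} (hx : x :: v ≠ v ++ [x]) :
    windowCount q (m + 1) (x :: v) l ≤ windowCount q (m + 1) (v ++ [x]) l :=
  (hl _).trans ((windowCount_pos_iff (by simp [hv])).2 (hs x hx))

variable [NeZero q]

theorem IsTrail.length_le (hl : IsTrail m l) : l.length ≤ q ^ (m + 1) + m := by
  let words : Finset (List (ZMod q)) :=
    Finset.univ.image (List.Vector.toList : List.Vector (ZMod q) (m + 1) → _)
  have hmaps : ∀ i ∈ Finset.range (l.length + 1 - (m + 1)),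
      (l.drop i).take (m + 1) ∈ words := by
    intro i hi
    rw [Finset.mem_range] at hi
    refine Finset.mem_image.2 ⟨⟨_, ?_⟩, Finset.mem_univ _, rfl⟩
    rw [List.length_take, List.length_drop]
    omega
  have hwords : words.card ≤ q ^ (m + 1) := by
    simpa using Finset.card_image_le (s := Finset.univ)
      (f := (List.Vector.toList : List.Vector (ZMod q) (m + 1) → _))
  have hcard := Finset.card_le_mul_card_image_of_maps_to hmaps 1 fun w _ => hl w
  rw [Finset.card_range] at hcard
  omega

/-- Both sides count the occurrences of `v` in `l`. -/
theorem sum_windowCount_cons_add (ht : t <+: l) (htm : t.length = m) (v : List (ZMod q)) :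
    ∑ x, windowCount q (m + 1) (x :: v) l + (if v = t then 1 else 0) =
      ∑ x, windowCount q (m + 1) (v ++ [x]) l + (if v = lastN m l then 1 else 0) := by
  obtain ⟨r, rfl⟩ := ht
  induction r using List.reverseRecOn with
  | nil => simp [windowCount_of_length_lt, lastN, htm]
  | append_singleton r c ih =>
    have hm : m ≤ (t ++ r).length := by simp [htm]
    have hin : (∑ x, if x :: v = lastN m (t ++ r) ++ [c] then 1 else 0) =
        if v = lastN m (t ++ r ++ [c]) then 1 else 0 := by
      obtain ⟨b, u, hbu⟩ : ∃ b u, lastN m (t ++ r) ++ [c] = b :: u :=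
        List.exists_cons_of_ne_nil (by simp)
      rw [lastN_concat c hm, hbu, List.tail_cons]
      by_cases hvu : v = u <;> simp [hvu]
    have hout : (∑ x, if v ++ [x] = lastN m (t ++ r) ++ [c] then 1 else 0) =
        if v = lastN m (t ++ r) then 1 else 0 := by
      simp only [List.append_singleton_inj]
      by_cases hv : v = lastN m (t ++ r) <;> simp [hv]
    simp only [← List.append_assoc, windowCount_concat c hm, Finset.sum_add_distrib, hin, hout]
    omega

theorem sum_nonloop_windowCount_cons_add (ht : t <+: l) (htm : t.length = m) (v : List (ZMod q)) :
    ∑ x with x :: v ≠ v ++ [x], windowCount q (m + 1) (x :: v) l + (if v = t then 1 else 0) =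
      ∑ x with x :: v ≠ v ++ [x], windowCount q (m + 1) (v ++ [x]) l +
        (if v = lastN m l then 1 else 0) := by
  have hbal := sum_windowCount_cons_add ht htm v
  have hloop : ∑ x with ¬ x :: v ≠ v ++ [x], windowCount q (m + 1) (x :: v) l =
      ∑ x with ¬ x :: v ≠ v ++ [x], windowCount q (m + 1) (v ++ [x]) l :=
    Finset.sum_congr rfl fun x hx => by rw [not_ne_iff.1 (Finset.mem_filter.1 hx).2]
  rw [← Finset.sum_filter_add_sum_filter_not _ (fun x => x :: v ≠ v ++ [x]),
    ← Finset.sum_filter_add_sum_filter_not (f := fun x => windowCount q (m + 1) (v ++ [x]) l) _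
      (fun x => x :: v ≠ v ++ [x]), hloop] at hbal
  omega

/-- If the trail had started elsewhere, its last vertex would have one more edge in than out. -/
theorem IsTrail.lastN_eq_of_isSaturated (hl : IsTrail m l) (ht : t <+: l) (htm : t.length = m)
    (hs : IsSaturated l (lastN m l)) : lastN m l = t := by
  by_contra hne
  have hv : (lastN m l).length = m := length_lastN (htm ▸ ht.length_le)
  have hbal := sum_nonloop_windowCount_cons_add ht htm (lastN m l)
  rw [if_neg hne, if_pos rfl, add_zero] at hbal
  refine (Nat.lt_of_lt_of_eq (Nat.lt_succ_self _) hbal.symm).not_ge ?_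
  exact Finset.sum_le_sum fun x hx => hs.windowCount_cons_le hl hv (Finset.mem_filter.1 hx).2

theorem IsClosedTrail.cons_infix_of_isSaturated (hl : IsClosedTrail m l) (hv : v.length = m)
    (hs : IsSaturated l v) {x : ZMod q} (hx : x :: v ≠ v ++ [x]) : x :: v <:+: l := by
  have hbal := Nat.add_right_cancel <|
    sum_nonloop_windowCount_cons_add hl.lastN_isPrefix (length_lastN hl.le_length) v
  have heq : windowCount q (m + 1) (x :: v) l = windowCount q (m + 1) (v ++ [x]) l :=
    (Finset.sum_eq_sum_iff_of_le fun y hy =>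
      hs.windowCount_cons_le hl.isTrail hv (Finset.mem_filter.1 hy).2).1 hbal x (by simpa using hx)
  rw [← windowCount_pos_iff (n := m + 1) (by simp [hv]), heq, windowCount_pos_iff (by simp [hv])]
  exact hs x hx

end Trail

section Greedy

variable {q s m : ℕ} {P : List (ZMod q) → Fin q → ZMod q} {I l v : List (ZMod q)}

theorem nextDigit_eq_none_iff {n : ℕ} :
    nextDigit q s n P l = none ↔ ∀ i, lastN (n - 1) l ++ [P (lastN s l) i] <:+: l := by
  simp [nextDigit]

theorem nextDigit_eq_some {n : ℕ} {c : ZMod q} (h : nextDigit q s n P l = some c) :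
    ¬ lastN (n - 1) l ++ [c] <:+: l ∧
      ∃ i, P (lastN s l) i = c ∧ ∀ j < i, lastN (n - 1) l ++ [P (lastN s l) j] <:+: l := by
  rw [nextDigit, List.find?_eq_some_iff_getElem] at h
  obtain ⟨hnew, i, hi, hc, hpre⟩ := h
  rw [List.length_map, List.length_finRange] at hi
  refine ⟨by simpa using hnew, ⟨i, hi⟩, by simpa using hc, fun j hj => ?_⟩
  simpa using hpre j hj

/-- `l` is one of the partial sequences built by the greedy construction of `(P, I)`. -/
inductive IsGreedyPartial (q s n : ℕ) (P : List (ZMod q) → Fin q → ZMod q) (I : List (ZMod q)) :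
    List (ZMod q) → Prop
  | init : IsGreedyPartial q s n P I I
  | concat {l : List (ZMod q)} {c : ZMod q} (h : IsGreedyPartial q s n P I l)
      (hc : nextDigit q s n P l = some c) : IsGreedyPartial q s n P I (l ++ [c])

theorem IsGreedyPartial.greedyAux {n : ℕ} (h : IsGreedyPartial q s n P I l) (f : ℕ) :
    IsGreedyPartial q s n P I (greedyAux q s n P f l) := by
  induction f generalizing l with
  | zero => exact h
  | succ f ih =>
    rw [PaperDB.greedyAux]
    split
    · exact h
    · next c hc => exact ih (h.concat hc)

theorem nextDigit_greedyAux_eq_none_or_length_eq (n f : ℕ) (l : List (ZMod q)) :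
    nextDigit q s n P (greedyAux q s n P f l) = none ∨
      (greedyAux q s n P f l).length = l.length + f := by
  induction f generalizing l with
  | zero => exact Or.inr rfl
  | succ f ih =>
    rw [greedyAux]
    split
    · next hnone => exact Or.inl hnone
    · next c _ =>
      refine (ih (l ++ [c])).imp_right fun hlen => ?_
      rw [hlen, List.length_append, List.length_singleton, add_assoc, add_comm 1]

theorem isGreedyPartial_greedy {n : ℕ} : IsGreedyPartial q s n P I (greedy q s n P I) :=
  IsGreedyPartial.init.greedyAux _

namespace IsGreedyPartial

theorem isPrefix {n : ℕ} (h : IsGreedyPartial q s n P I l) : I <+: l := by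
  induction h with
  | init => exact List.prefix_rfl
  | concat _ _ ih => exact ih.trans (List.prefix_append _ _)

theorem le_length (h : IsGreedyPartial q s (m + 1) P I l) (hI : I.length = m + 1) :
    m ≤ l.length := by
  have := h.isPrefix.length_le
  omega

theorem isTrail (h : IsGreedyPartial q s (m + 1) P I l) (hI : I.length = m + 1) :
    IsTrail m l := by
  intro w
  induction h with
  | init =>
    rw [windowCount_eq_card, hI, Nat.add_sub_cancel_left]
    exact Finset.card_filter_le _ _
  | concat h hc ih =>
    rw [windowCount_concat _ (h.le_length hI)]
    split_ifs with hw
    · have hnew := (nextDigit_eq_some hc).1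
      have hlen : w.length = m + 1 := by simp [hw, length_lastN (h.le_length hI)]
      rw [Nat.add_sub_cancel, ← hw, ← windowCount_pos_iff hlen] at hnew
      omega
    · exact ih

theorem concat_infix_of_le (h : IsGreedyPartial q s (m + 1) P I l) (hP : IsPrefFun q s P)
    (hs : s ≤ m) (hI : I.length = m + 1) (hv : v.length = m) {i j : Fin q} (hij : i ≤ j)
    (hj : v ++ [P (lastN s v) j] <:+: l) (hne : v ++ [P (lastN s v) j] ≠ I) :
    v ++ [P (lastN s v) i] <:+: l := by
  induction h with
  | init => exact absurd (hj.eq_of_length (by simp [hv, hI])) hne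
  | @concat l c h hc ih =>
    have hl := h.le_length hI
    obtain ⟨-, k, hk, hpre⟩ := nextDigit_eq_some hc
    rcases hij.eq_or_lt with rfl | hlt
    · exact hj
    refine List.infix_append_of_infix_left ?_
    rcases (infix_concat_iff_eq_or_isInfix (by simp [hv]) hl).1 hj with hnew | hold
    · obtain ⟨rfl, hjc⟩ := List.append_singleton_inj.1 hnew
      rw [lastN_lastN hs hl] at hjc ⊢
      have hjk : j = k := (hP _ (length_lastN (hs.trans hl))).1 (hjc.trans hk.symm)
      exact hpre i (hjk ▸ hlt)
    · exact ih hold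

theorem isSaturated_lastN_of_nextDigit_eq_none (h : IsGreedyPartial q s (m + 1) P I l)
    (hP : IsPrefFun q s P) (hs : s ≤ m) (hI : I.length = m + 1)
    (hnone : nextDigit q s (m + 1) P l = none) : IsSaturated l (lastN m l) := by
  intro x _
  obtain ⟨i, rfl⟩ := (hP (lastN s l) (length_lastN (hs.trans (h.le_length hI)))).2 x
  exact nextDigit_eq_none_iff.1 hnone i

variable [NeZero q]

theorem lastN_eq_of_isSaturated (h : IsGreedyPartial q s (m + 1) P I l) (hI : I.length = m + 1)
    (hsat : IsSaturated l (lastN m l)) : lastN m l = I.take m :=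
  (h.isTrail hI).lastN_eq_of_isSaturated ((List.take_prefix _ _).trans h.isPrefix)
    (by simp [hI]) hsat

theorem isSaturated_of_isInfix_concat_top (h : IsGreedyPartial q s (m + 1) P I l)
    (hP : IsPrefFun q s P) (hs : s ≤ m) (hI : I.length = m + 1) (hv : v.length = m)
    (htop : v ++ [P (lastN s v) ⊤] <:+: l) (hne : v ++ [P (lastN s v) ⊤] ≠ I) :
    IsSaturated l v := by
  intro x _
  obtain ⟨i, rfl⟩ := (hP (lastN s v) (length_lastN (hv ▸ hs))).2 x
  exact h.concat_infix_of_le hP hs hI hv le_top htop hne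

/-- When a loop is the least preferred edge, it is only taken at a saturated vertex, and a trail
can only be at a saturated vertex if it started there. -/
theorem not_replicate_isInfix (h : IsGreedyPartial q s (m + 1) P I l) (hP : IsPrefFun q s P)
    (hs : s ≤ m) (hI : I.length = m + 1) {a : ZMod q} (htop : P (List.replicate s a) ⊤ = a)
    (ha : I.take m ≠ List.replicate m a) : ¬ List.replicate (m + 1) a <:+: l := by
  induction h with
  | init =>
    intro hinf
    rw [← hinf.eq_of_length (by simp [hI])] at ha
    simp at ha
  | @concat l c h hc ih =>
    have hl := h.le_length hI
    rw [infix_concat_iff_eq_or_isInfix (by simp) hl, List.replicate_succ', or_iff_left]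
    swap
    · rwa [← List.replicate_succ']
    intro heq
    obtain ⟨hlast, rfl⟩ := List.append_singleton_inj.1 heq
    obtain ⟨-, k, hk, hpre⟩ := nextDigit_eq_some hc
    have hlastN : lastN s l = List.replicate s a := by
      rw [← lastN_lastN hs hl, ← hlast, lastN_replicate hs]
    have hinj := hP (lastN s l) (length_lastN (hs.trans hl))
    have hktop : k = ⊤ := hinj.1 (by rw [hk, hlastN, htop])
    have hsat : IsSaturated l (lastN m l) := by
      intro x hx
      obtain ⟨j, rfl⟩ := hinj.2 x
      refine hpre j (hktop ▸ lt_top_iff_ne_top.2 ?_)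
      rintro rfl
      rw [← hktop, hk, ← hlast] at hx
      exact hx (cons_eq_concat_iff.2 (by rw [List.length_replicate]))
    exact ha ((h.lastN_eq_of_isSaturated hI hsat).symm.trans hlast.symm)

end IsGreedyPartial

/-- The fuel `q ^ n` is not exhausted, since there are only `q ^ n` different windows. -/
theorem nextDigit_greedy_eq_none [NeZero q] (hI : I.length = m + 1) :
    nextDigit q s (m + 1) P (greedy q s (m + 1) P I) = none := by
  refine (nextDigit_greedyAux_eq_none_or_length_eq (m + 1) (q ^ (m + 1)) I).resolve_right ?_
  intro hlen
  have := ((IsGreedyPartial.init.greedyAux (q ^ (m + 1))).isTrail (s := s) (P := P) hI).length_le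
  omega

theorem isSaturated_lastN_greedy [NeZero q] (hP : IsPrefFun q s P) (hs : s ≤ m)
    (hI : I.length = m + 1) :
    IsSaturated (greedy q s (m + 1) P I) (lastN m (greedy q s (m + 1) P I)) :=
  isGreedyPartial_greedy.isSaturated_lastN_of_nextDigit_eq_none hP hs hI
    (nextDigit_greedy_eq_none hI)

theorem lastN_greedy [NeZero q] (hP : IsPrefFun q s P) (hs : s ≤ m) (hI : I.length = m + 1) :
    lastN m (greedy q s (m + 1) P I) = I.take m :=
  isGreedyPartial_greedy.lastN_eq_of_isSaturated hI (isSaturated_lastN_greedy hP hs hI)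

theorem isClosedTrail_greedy [NeZero q] (hP : IsPrefFun q s P) (hs : s ≤ m)
    (hI : I.length = m + 1) : IsClosedTrail m (greedy q s (m + 1) P I) where
  isTrail := isGreedyPartial_greedy.isTrail hI
  le_length := isGreedyPartial_greedy.le_length hI
  lastN_isPrefix := by
    rw [lastN_greedy hP hs hI]
    exact (List.take_prefix _ _).trans isGreedyPartial_greedy.isPrefix

end Greedy

section SpanOne

variable {q m : ℕ} [NeZero q] {P : List (ZMod q) → Fin q → ZMod q} {l : List (ZMod q)}
  {z a b : ZMod q}

/-- The edges that repeat the digit `a` are least preferred, so a vertex is saturated as soon as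
the edge repeating its last digit is used. The vertices ending in `a` are reached from `a ... a` by
following these edges backwards. -/
theorem isSaturated_append_replicate (hP : IsPrefFun q 1 P) (htop : P [a] ⊤ = a)
    (h : IsGreedyPartial q 1 (m + 1) P (List.replicate (m + 1) z) l) (hl : IsClosedTrail m l)
    (ha : IsSaturated l (List.replicate m a)) (u : List (ZMod q)) (k : ℕ)
    (hm : u.length + (k + 1) = m) : IsSaturated l (u ++ List.replicate (k + 1) a) := by
  induction u generalizing k with
  | nil => simpa [← hm] using ha
  | cons y u ih =>
    let v := y :: u ++ List.replicate (k + 1) a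
    let w := u ++ List.replicate (k + 2) a
    have hv : v.length = m := by
      simp only [v, ← hm, List.length_append, List.length_replicate, List.length_cons]
    have hw : w.length = m := by
      simp only [w, ← hm, List.length_append, List.length_replicate, List.length_cons]
      omega
    have hedge : v ++ [a] = y :: w := by simp [v, w, List.replicate_succ' (n := k + 1)]
    change IsSaturated l v
    by_cases hloop : y :: w = w ++ [y]
    · have hconst : v ++ [a] = List.replicate (m + 1) y := by
        rw [hedge, cons_eq_concat_iff.1 hloop, hw, List.replicate_succ]
      rw [List.replicate_succ'] at hconst
      obtain ⟨hva, rfl⟩ := List.append_singleton_inj.1 hconst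
      rwa [hva]
    · have hinf : y :: w <:+: l :=
        hl.cons_infix_of_isSaturated hw (ih (k + 1) (by simp at hm; omega)) hloop
      have hlast : P (lastN 1 v) ⊤ = a := by rw [lastN_one_append_replicate, htop]
      refine h.isSaturated_of_isInfix_concat_top hP (by omega) (by simp) hv ?_ ?_
      · rwa [hlast, hedge]
      · rw [hlast, hedge]
        exact cons_ne_replicate_of_cons_ne_concat hloop _ _

/-- The edge `b ... b a` enters a vertex ending in `a` and is the least preferred edge out of
`b ... b` apart from the loop. -/
theorem isSaturated_replicate_of_isCoatom (hP : IsPrefFun q 1 P) (htop : ∀ x, P [x] ⊤ = x)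
    (h : IsGreedyPartial q 1 (m + 1) P (List.replicate (m + 1) z) l) (hl : IsClosedTrail m l)
    (hm : 1 ≤ m) {j : Fin q} (hj : IsCoatom j) (hba : P [b] j = a)
    (ha : IsSaturated l (List.replicate m a)) : IsSaturated l (List.replicate m b) := by
  obtain ⟨k, rfl⟩ := Nat.exists_eq_add_of_le' hm
  have hne : a ≠ b := by
    rintro rfl
    exact hj.1 ((hP [a] rfl).1 (hba.trans (htop a).symm))
  let w := List.replicate k b ++ [a]
  have hw : w.length = k + 1 := by simp [w]
  have hloop : b :: w ≠ w ++ [b] := by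
    rw [Ne, cons_eq_concat_iff, hw, List.replicate_succ', List.append_singleton_inj]
    exact fun heq => hne heq.2
  have hsat : IsSaturated l w :=
    isSaturated_append_replicate hP (htop a) h hl ha (List.replicate k b) 0 (by simp)
  have hedge : List.replicate (k + 1) b ++ [a] = b :: w := rfl
  have hinf : b :: w <:+: l := hl.cons_infix_of_isSaturated hw hsat hloop
  have hlast : lastN 1 (List.replicate (k + 1) b) = [b] := lastN_replicate hm b
  intro x hx
  obtain ⟨i, rfl⟩ := (hP [b] rfl).2 x
  have hi : i ≠ ⊤ := by
    rintro rfl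
    rw [htop] at hx
    exact hx (cons_eq_concat_iff.2 (by rw [List.length_replicate]))
  have hij : i ≤ j := le_of_not_gt fun hji => hi (hj.2 i hji)
  rw [← hlast]
  refine h.concat_infix_of_le hP hm (by simp) (by simp) hij ?_ ?_
  · rwa [hlast, hba, hedge]
  · rw [hlast, hba, hedge]
    exact cons_ne_replicate_of_cons_ne_concat hloop _ _

end SpanOne

section PreferOpposite

variable {q d : ℕ} [NeZero q]

theorem isPrefFun_OprefL (hd : Nat.Coprime d q) (s : ℕ) : IsPrefFun q s (OprefL q d) := by
  intro x _
  refine (Fintype.bijective_iff_injective_and_card _).2 ⟨fun i j hij => ?_, by simp⟩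
  have hmul := ((ZMod.isUnit_iff_coprime d q).2 hd).mul_right_cancel (add_left_cancel hij)
  rw [Nat.cast_succ, Nat.cast_succ, add_left_inj, ZMod.natCast_eq_natCast_iff',
    Nat.mod_eq_of_lt i.2, Nat.mod_eq_of_lt j.2] at hmul
  exact Fin.ext hmul

theorem OprefL_top (a : ZMod q) : OprefL q d [a] ⊤ = a := by
  simp [OprefL, Nat.sub_add_cancel (NeZero.pos q)]

theorem exists_isCoatom_OprefL_eq (hq : 2 ≤ q) (d : ℕ) (a : ZMod q) :
    ∃ j : Fin q, IsCoatom j ∧ OprefL q d [a + d] j = a := by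
  have hlt : q - 2 < q := by omega
  refine ⟨⟨q - 2, hlt⟩, ⟨?_, fun i hi => ?_⟩, ?_⟩
  · rw [Ne, Fin.ext_iff, Fin.val_top]
    simp only
    omega
  · rw [Fin.lt_def] at hi
    rw [Fin.ext_iff, Fin.val_top]
    simp only at hi
    omega
  · have hcast : ((q - 2 + 1 : ℕ) : ZMod q) = -1 := by
      rw [eq_neg_iff_add_eq_zero, ← Nat.cast_succ, show (q - 2 + 1).succ = q by omega,
        ZMod.natCast_self]
    simp [OprefL, hcast]

theorem forall_of_add_coprime (hd : Nat.Coprime d q) {p : ZMod q → Prop} (zero : p 0)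
    (add : ∀ a, p a → p (a + d)) (a : ZMod q) : p a := by
  have hmul : ∀ i : ℕ, p (i * d) := by
    intro i
    induction i with
    | zero => simpa using zero
    | succ i ih =>
      rw [Nat.cast_succ, add_one_mul]
      exact add _ ih
  have := hmul (a * (d : ZMod q)⁻¹).val
  rwa [ZMod.natCast_zmod_val, mul_assoc, mul_comm _ (d : ZMod q), ZMod.coe_mul_inv_eq_one d hd,
    mul_one] at this

variable {m : ℕ}

theorem isGreedyPartial_oSeq (q m d : ℕ) :
    IsGreedyPartial q 1 (m + 1) (OprefL q d) (List.replicate (m + 1) 0) (oSeq q (m + 1) d) :=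
  isGreedyPartial_greedy

theorem not_replicate_infix_oSeq (hm : 1 ≤ m) (hd : Nat.Coprime d q) {a : ZMod q} (ha : a ≠ 0) :
    ¬ List.replicate (m + 1) a <:+: oSeq q (m + 1) d := by
  refine (isGreedyPartial_oSeq q m d).not_replicate_isInfix (isPrefFun_OprefL hd 1) hm (by simp)
    (OprefL_top a) ?_
  rw [List.take_replicate, min_eq_left m.le_succ, Ne, List.replicate_right_inj (by omega)]
  exact ha.symm

theorem isSaturated_oSeq (hq : 2 ≤ q) (hm : 1 ≤ m) (hd : Nat.Coprime d q) {v : List (ZMod q)}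
    (hv : v.length = m) : IsSaturated (oSeq q (m + 1) d) v := by
  have hP := isPrefFun_OprefL hd 1
  have hI : (List.replicate (m + 1) (0 : ZMod q)).length = m + 1 := List.length_replicate
  have h := isGreedyPartial_oSeq q m d
  have hl : IsClosedTrail m (oSeq q (m + 1) d) := isClosedTrail_greedy hP hm hI
  have hconst : ∀ a, IsSaturated (oSeq q (m + 1) d) (List.replicate m a) := by
    refine forall_of_add_coprime hd ?_ fun a ha => ?_
    · have hzero := isSaturated_lastN_greedy hP hm hI
      rwa [lastN_greedy hP hm hI, List.take_replicate, min_eq_left m.le_succ] at hzero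
    · obtain ⟨j, hj, hja⟩ := exists_isCoatom_OprefL_eq hq d a
      exact isSaturated_replicate_of_isCoatom hP OprefL_top h hl hm hj hja ha
  obtain ⟨u, a, rfl⟩ : ∃ u a, v = u ++ [a] :=
    ⟨_, _, (List.dropLast_append_getLast (List.ne_nil_of_length_pos (hv ▸ hm))).symm⟩
  exact isSaturated_append_replicate hP (OprefL_top a) h hl (hconst a) u 0 (by simpa using hv)

theorem infix_oSeq_of_ne_replicate (hq : 2 ≤ q) (hm : 1 ≤ m) (hd : Nat.Coprime d q)
    {w : List (ZMod q)} (hw : w.length = m + 1)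
    (hne : ∀ a, a ≠ 0 → w ≠ List.replicate (m + 1) a) : w <:+: oSeq q (m + 1) d := by
  by_cases hzero : w = List.replicate (m + 1) 0
  · exact hzero ▸ (isGreedyPartial_oSeq q m d).isPrefix.isInfix
  obtain ⟨v, x, rfl⟩ : ∃ v x, w = v ++ [x] :=
    ⟨_, _, (List.dropLast_append_getLast (List.ne_nil_of_length_eq_add_one hw)).symm⟩
  have hv : v.length = m := by simpa using hw
  refine isSaturated_oSeq hq hm hd hv x fun hloop => ?_
  have hx : v ++ [x] = List.replicate (m + 1) x := by
    rw [← hloop, cons_eq_concat_iff.1 hloop, hv, List.replicate_succ]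
  rcases eq_or_ne x 0 with rfl | hx0
  · exact hzero hx
  · exact hne x hx0 hx

end PreferOpposite

/-- For `gcd(d,q) = 1`, the generalized prefer-opposite
sequence `o_n = (O,0^n)` is a de Bruijn sequence missing exactly the constant
words `1^n,…,(q-1)^n`: no nonzero constant `n`-word occurs, and every other
`n`-word occurs exactly once as a contiguous window. -/
theorem oSeq_missing_words (q n d : ℕ) (hq : 2 ≤ q) (hn : 2 ≤ n)
    (hd : Nat.Coprime d q) :
    (∀ a : ZMod q, a ≠ 0 → ¬ (List.replicate n a <:+: oSeq q n d)) ∧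
    (∀ w : List (ZMod q), w.length = n →
      (∀ a : ZMod q, a ≠ 0 → w ≠ List.replicate n a) →
      windowCount q n w (oSeq q n d) = 1) := by
  have : NeZero q := ⟨by omega⟩
  obtain ⟨m, rfl⟩ : ∃ m, n = m + 1 := Nat.exists_eq_add_of_le' (by omega)
  have hm : 1 ≤ m := by omega
  refine ⟨fun a ha => not_replicate_infix_oSeq hm hd ha, fun w hw hne => le_antisymm ?_ ?_⟩
  · exact (isGreedyPartial_oSeq q m d).isTrail List.length_replicate w
  · exact (windowCount_pos_iff hw).2 (infix_oSeq_of_ne_replicate hq hm hd hw hne)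

end PaperDB
end

section
/- Let q ≥ 2, n ≥ 2, gcd(d,q) = 1, and let o_n = (O,0^n) be the generalized prefer-opposite sequence. For i = 1,…,q−1 set σ_{q−1−i} = i·(q−1)·d (mod q) (that is, σ_{q−1−i} is the i-th iterate of the map a ↦ a + (q−1)d applied to 0); the digits σ_0,…,σ_{q−2} are a rearrangement of 1,…,q−1. Then o_n terminates with the suffix σ_{q−2}^{n−1} σ_{q−3}^{n−1} ⋯ σ_1^{n−1} σ_0^{n−1} 0^{n−1}, i.e., the block of σ_{q−2} repeated n−1 times, followed by σ_{q−3} repeated n−1 times, …, followed by σ_0 repeated n−1 times, followed by 0 repeated n−1 times. -/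
/-!
Write `n = p + 2` and view the greedy sequence as a trail in the de Bruijn graph whose vertices are
the words of length `p + 1` and whose edges are the words of length `p + 2`. From a vertex with last
digit `a` the edges are taken in the order `a + d, a + 2d, …, a - d, a`, and no edge is repeated.

*The trail is closed.* All in-degrees and out-degrees are `q`, so a trail can only get stuck where
it began, at `0 ⋯ 0`. Hence the edge `a ⋯ a` with `a ≠ 0` is never used: it is the last choice at
its source, to which it leads back, so the trail would be stuck there.

*All other edges are used.* The vertex `0 ⋯ 0` is exhausted, so all edges into it are used. If an
edge that repeats the last digit is used, then its source is exhausted, and by balance so are the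
edges into its source; going backwards along a word gives all words that end in `0`. In particular
the edge `d ⋯ d 0` is used. As `0 = d - d` is the last choice but one at `d ⋯ d`, balance shows that
all edges into this vertex except `d ⋯ d` are used, and the argument repeats with `d, 2d, …`.

*The suffix.* If the trail is at a vertex `v ≠ a ⋯ a` that ends in `a`, then the last edge out of
`v` is still to come and repeats the digit `a`. So the last vertex ending in `a` is `a ⋯ a`. For
`a ≠ 0` it is left by the digit `a - d`. Afterwards `a - d` can only follow `a - d`: at any other
vertex the next choice after `a - d` is `a`, which would occur once more. So the last vertex ending
in `a - d` is reached by appending `a - d` exactly `p + 1` times. Starting from `a = -d`, this leads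
through `-2d, -3d, …` to the digit `0`, whose last occurrence is the end of the trail.
-/

namespace PaperDB

section Words

variable {A : Type*} {m n M : ℕ} {f : ℕ → A}

/-- The word of length `m` that starts at position `i` of the sequence `f`. -/
def window (m : ℕ) (f : ℕ → A) (i : ℕ) : Fin m → A := fun k => f (i + k)

/-- The word `e` is one of the first `M` windows of `f`. -/
def Used (f : ℕ → A) (M : ℕ) (e : Fin n → A) : Prop := ∃ i < M, window n f i = e

/-- The digits by which the vertex `v` of the de Bruijn graph is left along the first `M` edges
of `f`. -/
def outDigits (f : ℕ → A) (M : ℕ) (v : Fin m → A) : Set A := {c | Used f M (Fin.snoc v c)}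

/-- The first digits of those among the first `M` edges of `f` that lead to the vertex `v` of the
de Bruijn graph. -/
def inDigits (f : ℕ → A) (M : ℕ) (v : Fin m → A) : Set A := {x | Used f M (Fin.cons x v)}

theorem Used.mono {e : Fin n → A} {N : ℕ} (h : Used f N e) (hNM : N ≤ M) : Used f M e :=
  let ⟨i, hi, he⟩ := h
  ⟨i, hi.trans_le hNM, he⟩

theorem window_eq_const_iff {i : ℕ} {a : A} :
    window m f i = (fun _ => a) ↔ ∀ k < m, f (i + k) = a :=
  funext_iff.trans Fin.forall_iff

theorem window_succ_eq_snoc (m : ℕ) (f : ℕ → A) (i : ℕ) :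
    window (m + 1) f i = Fin.snoc (window m f i) (f (i + m)) := by
  ext k
  cases k using Fin.lastCases <;> simp [window]

theorem window_succ_eq_cons (m : ℕ) (f : ℕ → A) (i : ℕ) :
    window (m + 1) f i = Fin.cons (f i) (window m f (i + 1)) := by
  ext k
  cases k using Fin.cases <;> simp [window, Nat.add_right_comm, Nat.add_assoc]

theorem window_succ_eq_snoc_iff {i : ℕ} {v : Fin m → A} {c : A} :
    window (m + 1) f i = Fin.snoc v c ↔ window m f i = v ∧ f (i + m) = c := by
  rw [window_succ_eq_snoc, Fin.snoc_inj]

theorem window_succ_eq_cons_iff {i : ℕ} {x : A} {v : Fin m → A} :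
    window (m + 1) f i = Fin.cons x v ↔ f i = x ∧ window m f (i + 1) = v := by
  rw [window_succ_eq_cons, Fin.cons_inj]

theorem window_succ_eq_window_succ_iff {i j : ℕ} :
    window (m + 1) f i = window (m + 1) f j ↔
      window m f i = window m f j ∧ f (i + m) = f (j + m) := by
  rw [window_succ_eq_snoc m f j, window_succ_eq_snoc_iff]

theorem mem_outDigits {v : Fin m → A} {c : A} :
    c ∈ outDigits f M v ↔ ∃ i < M, window m f i = v ∧ f (i + m) = c := by
  simp only [outDigits, Used, Set.mem_ofPred_eq, window_succ_eq_snoc_iff]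

theorem mem_inDigits {v : Fin m → A} {x : A} :
    x ∈ inDigits f M v ↔ ∃ i < M, f i = x ∧ window m f (i + 1) = v := by
  simp only [inDigits, Used, Set.mem_ofPred_eq, window_succ_eq_cons_iff]

theorem ncard_outDigits [DecidableEq A] (hf : Set.InjOn (window (m + 1) f) (Set.Iio M))
    (v : Fin m → A) : (outDigits f M v).ncard = Nat.count (fun i => window m f i = v) M := by
  have himage : outDigits f M v = (fun i => f (i + m)) ''
      ({i ∈ Finset.range M | window m f i = v} : Finset ℕ) := by
    ext c
    simp [mem_outDigits, and_assoc]
  have hinj : Set.InjOn (fun i => f (i + m))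
      ({i ∈ Finset.range M | window m f i = v} : Finset ℕ) := by
    intro i hi j hj hij
    simp only [Finset.coe_filter, Finset.mem_range, Set.mem_ofPred_eq] at hi hj
    exact hf hi.1 hj.1 (window_succ_eq_window_succ_iff.2 ⟨hi.2.trans hj.2.symm, hij⟩)
  rw [himage, hinj.ncard_image, Set.ncard_coe_finset, Nat.count_eq_card_filter_range]

theorem ncard_inDigits [DecidableEq A] (hf : Set.InjOn (window (m + 1) f) (Set.Iio M))
    (v : Fin m → A) : (inDigits f M v).ncard = Nat.count (fun i => window m f (i + 1) = v) M := by
  have himage : inDigits f M v = f ''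
      ({i ∈ Finset.range M | window m f (i + 1) = v} : Finset ℕ) := by
    ext x
    simp [mem_inDigits, and_assoc, and_comm (a := f _ = x)]
  have hinj : Set.InjOn f ({i ∈ Finset.range M | window m f (i + 1) = v} : Finset ℕ) := by
    intro i hi j hj hij
    simp only [Finset.coe_filter, Finset.mem_range, Set.mem_ofPred_eq] at hi hj
    refine hf hi.1 hj.1 ?_
    rw [window_succ_eq_cons, window_succ_eq_cons, hi.2, hj.2, hij]
  rw [himage, hinj.ncard_image, Set.ncard_coe_finset, Nat.count_eq_card_filter_range]

theorem ncard_outDigits_add_ite [DecidableEq A] (hf : Set.InjOn (window (m + 1) f) (Set.Iio M))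
    (v : Fin m → A) :
    (outDigits f M v).ncard + (if window m f M = v then 1 else 0) =
      (inDigits f M v).ncard + if window m f 0 = v then 1 else 0 := by
  rw [ncard_outDigits hf, ncard_inDigits hf, ← Nat.count_succ (fun i => window m f i = v),
    Nat.count_succ']

theorem window_eq_window_zero_of_outDigits_eq_univ [Finite A]
    (hf : Set.InjOn (window (m + 1) f) (Set.Iio M))
    (hM : outDigits f M (window m f M) = Set.univ) : window m f M = window m f 0 := by
  classical
  by_contra hne
  have hbalance := ncard_outDigits_add_ite hf (window m f M)
  rw [hM, if_pos rfl, if_neg (Ne.symm hne)] at hbalance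
  have := Set.ncard_le_ncard (Set.subset_univ (inDigits f M (window m f M)))
  omega

theorem ncard_outDigits_eq_ncard_inDigits (hf : Set.InjOn (window (m + 1) f) (Set.Iio M))
    (hclosed : window m f M = window m f 0) (v : Fin m → A) :
    (outDigits f M v).ncard = (inDigits f M v).ncard := by
  classical
  simpa only [hclosed, Nat.add_right_cancel_iff] using ncard_outDigits_add_ite hf v

end Words

section LastVisit

variable {A : Type*} {f : ℕ → A} {p M : ℕ} {a : A}

/-- Within the first `M` edges of `f`, the last time at a vertex with last digit `a` is `t`, where
vertices are words of length `p + 1`. -/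
def IsLastVisit (f : ℕ → A) (p M : ℕ) (a : A) (t : ℕ) : Prop :=
  IsGreatest {t | t ≤ M ∧ f (t + p) = a} t

theorem IsLastVisit.exists_of_apply_eq {i : ℕ} (hi : i ≤ M) (ha : f (i + p) = a) :
    ∃ t, IsLastVisit f p M a t :=
  BddAbove.exists_isGreatest_of_nonempty ⟨M, fun _ h => h.1⟩ ⟨i, hi, ha⟩

end LastVisit

section Trails

variable {A : Type*} [AddCommGroup A] {d : A} {p M : ℕ} {f : ℕ → A}

theorem ne_zero_of_mem_multiples {a : A} (h : a ∈ AddSubmonoid.multiples d) (ha : a ≠ 0) :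
    d ≠ 0 := by
  rintro rfl
  exact ha (by simpa using h)

/-- The first `M` windows of length `p + 2` of `f` form a run of the prefer-opposite construction
with step `d` from the zero word: they are distinct, and from each of them on, a digit other than
the first choice is appended only if the choice before it, which is smaller by `d`, would repeat a
window. The last choice at a word is to repeat its last digit. -/
structure GreedyTrail (d : A) (p M : ℕ) (f : ℕ → A) : Prop where
  window_zero : window (p + 2) f 0 = 0
  injOn : Set.InjOn (window (p + 2) f) (Set.Iio M)
  greedy : ∀ i, 0 < i → i < M → ∀ b, b ≠ f (i + p) → f (i + p + 1) = b + d →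
    b ∈ outDigits f i (window (p + 1) f i)

/-- A greedy trail that cannot be continued. -/
structure MaximalTrail (d : A) (p M : ℕ) (f : ℕ → A) : Prop extends GreedyTrail d p M f where
  outDigits_window : outDigits f M (window (p + 1) f M) = Set.univ

namespace GreedyTrail

theorem mono (T : GreedyTrail d p M f) {N : ℕ} (hN : N ≤ M) : GreedyTrail d p N f where
  window_zero := T.window_zero
  injOn := T.injOn.mono (Set.Iio_subset_Iio hN)
  greedy i hi hiN := T.greedy i hi (hiN.trans_le hN)

theorem apply_eq_zero (T : GreedyTrail d p M f) {k : ℕ} (hk : k < p + 2) : f k = 0 := by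
  simpa [window] using congrFun T.window_zero ⟨k, hk⟩

theorem window_succ_zero (T : GreedyTrail d p M f) : window (p + 1) f 0 = 0 :=
  window_eq_const_iff.2 fun k hk => by rw [Nat.zero_add, T.apply_eq_zero (by omega)]; rfl

theorem mem_outDigits_of_add_mem (T : GreedyTrail d p M f) {v : Fin (p + 1) → A} (hv : v ≠ 0)
    {b : A} (hb : b ≠ v (Fin.last p)) (h : b + d ∈ outDigits f M v) : b ∈ outDigits f M v := by
  obtain ⟨i, hi, rfl, hc⟩ := mem_outDigits.1 h
  have hi0 : i ≠ 0 := by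
    rintro rfl
    exact hv T.window_succ_zero
  exact (T.greedy i (Nat.pos_of_ne_zero hi0) hi b hb hc).mono hi.le

/-- Stepping down by `d` from the last choice but one runs through all earlier choices. -/
theorem mem_outDigits_of_last_sub_mem (T : GreedyTrail d p M f)
    (hd : ∀ x, x ∈ AddSubmonoid.multiples d) {v : Fin (p + 1) → A} (hv : v ≠ 0)
    (h : v (Fin.last p) - d ∈ outDigits f M v) {c : A} (hc : c ≠ v (Fin.last p)) :
    c ∈ outDigits f M v := by
  have hsub : ∀ r : ℕ, v (Fin.last p) - r • d ≠ v (Fin.last p) →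
      v (Fin.last p) - r • d ∈ outDigits f M v := by
    intro r
    induction r with
    | zero => simp
    | succ r ih =>
      intro hr
      by_cases hlast : v (Fin.last p) - r • d = v (Fin.last p)
      · rwa [succ_nsmul, ← sub_sub, hlast]
      · refine T.mem_outDigits_of_add_mem hv hr ?_
        rw [succ_nsmul, ← sub_sub, sub_add_cancel]
        exact ih hlast
  obtain ⟨r, hr⟩ := (AddSubmonoid.mem_multiples_iff _ _).1 (hd (v (Fin.last p) - c))
  have hcr : v (Fin.last p) - r • d = c := by rw [hr, sub_sub_cancel]
  exact hcr ▸ hsub r (hcr ▸ hc)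

theorem outDigits_eq_univ (T : GreedyTrail d p M f) (hd : ∀ x, x ∈ AddSubmonoid.multiples d)
    {v : Fin (p + 1) → A} (hv : v ≠ 0) (h : v (Fin.last p) ∈ outDigits f M v) :
    outDigits f M v = Set.univ := by
  refine Set.eq_univ_of_forall fun c => ?_
  have hsub : v (Fin.last p) - d ∈ outDigits f M v := by
    by_cases hne : v (Fin.last p) - d = v (Fin.last p)
    · rwa [hne]
    · exact T.mem_outDigits_of_add_mem hv hne (by rwa [sub_add_cancel])
  by_cases hc : c = v (Fin.last p)
  · rwa [hc]
  · exact T.mem_outDigits_of_last_sub_mem hd hv hsub hc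

theorem lt_of_mem_outDigits (T : GreedyTrail d p M f) {i j : ℕ} (hi : i < M) (hj : j ≤ M)
    (h : f (i + p + 1) ∈ outDigits f j (window (p + 1) f i)) : i < j := by
  obtain ⟨k, hk, hw, hc⟩ := mem_outDigits.1 h
  have : k = i := T.injOn (hk.trans_le hj) hi (window_succ_eq_window_succ_iff.2 ⟨hw, hc⟩)
  exact this ▸ hk

theorem le_of_window_eq (T : GreedyTrail d p M f) (hd : ∀ x, x ∈ AddSubmonoid.multiples d)
    {i j : ℕ} (hi : i < M) (hj : j < M) (hv : window (p + 1) f j ≠ 0)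
    (hrepeat : f (j + p + 1) = f (j + p)) (hij : window (p + 1) f i = window (p + 1) f j) :
    i ≤ j := by
  have hfull : outDigits f (j + 1) (window (p + 1) f j) = Set.univ :=
    (T.mono hj).outDigits_eq_univ hd hv (mem_outDigits.2 ⟨j, j.lt_succ_self, rfl, hrepeat⟩)
  refine Nat.le_of_lt_succ (T.lt_of_mem_outDigits hi hj ?_)
  exact Set.eq_univ_iff_forall.1 (hij ▸ hfull) _

theorem le_card_pow [Finite A] (T : GreedyTrail d p M f) : M ≤ Nat.card A ^ (p + 2) := by
  have hcard := Set.ncard_le_ncard (Set.subset_univ (window (p + 2) f '' Set.Iio M))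
  rw [T.injOn.ncard_image, Set.ncard_univ, Nat.card_fun, Nat.card_fin] at hcard
  simpa using hcard

end GreedyTrail

namespace MaximalTrail

variable [Finite A]

theorem window_eq_zero (T : MaximalTrail d p M f) : window (p + 1) f M = 0 :=
  (window_eq_window_zero_of_outDigits_eq_univ T.injOn T.outDigits_window).trans
    T.window_succ_zero

theorem ncard_outDigits_eq (T : MaximalTrail d p M f) (v : Fin (p + 1) → A) :
    (outDigits f M v).ncard = (inDigits f M v).ncard :=
  ncard_outDigits_eq_ncard_inDigits T.injOn (T.window_eq_zero.trans T.window_succ_zero.symm) v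

theorem inDigits_eq_univ (T : MaximalTrail d p M f) {v : Fin (p + 1) → A}
    (hv : outDigits f M v = Set.univ) : inDigits f M v = Set.univ := by
  rw [Set.eq_univ_iff_ncard, ← T.ncard_outDigits_eq, hv, Set.ncard_univ]

theorem lt_of_window_ne_zero (T : MaximalTrail d p M f) {i : ℕ} (hi : i ≤ M)
    (hne : window (p + 1) f i ≠ 0) : i < M :=
  hi.lt_of_ne fun h => hne (h ▸ T.window_eq_zero)

/-- The word `a ⋯ a` would be the last edge from a vertex to which it leads back. -/
theorem not_used_const (T : MaximalTrail d p M f)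
    (hd : ∀ x, x ∈ AddSubmonoid.multiples d) {a : A} (ha : a ≠ 0) :
    ¬ Used f M (fun _ : Fin (p + 2) => a) := by
  rintro ⟨i, hi, hw⟩
  have hconst := window_eq_const_iff.1 hw
  have hv : window (p + 1) f i = fun _ => a :=
    window_eq_const_iff.2 fun k hk => hconst k (by omega)
  have hv' : window (p + 1) f (i + 1) = fun _ => a :=
    window_eq_const_iff.2 fun k hk => by rw [Nat.add_right_comm]; exact hconst (k + 1) (by omega)
  have hne : (fun _ : Fin (p + 1) => a) ≠ 0 := fun h => ha (congrFun h 0)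
  have hlt : i + 1 < M := T.lt_of_window_ne_zero hi (hv' ▸ hne)
  have := T.le_of_window_eq hd hlt hi (hv ▸ hne)
    ((hconst (p + 1) (by omega)).trans (hconst p (by omega)).symm) (hv'.trans hv.symm)
  omega

theorem eq_zero_of_window_eq_const (T : MaximalTrail d p M f)
    (hd : ∀ x, x ∈ AddSubmonoid.multiples d) {a : A} {i : ℕ} (hi : i < M)
    (hw : window (p + 2) f i = fun _ => a) : i = 0 := by
  by_cases ha : a = 0
  · exact T.injOn hi (Nat.zero_lt_of_lt hi) ((ha ▸ hw).trans T.window_zero.symm)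
  · exact absurd ⟨i, hi, hw⟩ (T.not_used_const hd ha)

/-- Going back along the word `g`: an edge that repeats the last digit shows that its source is
exhausted, so by balance all edges into that source are used. -/
theorem used_window_of_eventually_const (T : MaximalTrail d p M f)
    (hd : ∀ x, x ∈ AddSubmonoid.multiples d) {a : A}
    (ha : ∀ x ≠ a, x ∈ inDigits f M (fun _ : Fin (p + 1) => a)) {g : ℕ → A} {e : ℕ}
    (hge : g e ≠ a) (hg : ∀ k, e < k → g k = a) (he : e ≤ p) : Used f M (window (p + 2) g 0) := by
  refine Nat.decreasingInduction' (P := fun i => Used f M (window (p + 2) g i))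
    (fun i hie _ hused => ?_) (Nat.zero_le e) ?_
  · have hlast : g (i + 1 + p) = a := hg _ (by omega)
    have hne : window (p + 1) g (i + 1) ≠ 0 := by
      intro h
      have h0 := window_eq_const_iff.1 h
      apply hge
      rw [← hlast, h0 p (by omega), ← h0 (e - (i + 1)) (by omega)]
      congr 1
      omega
    have hout : outDigits f M (window (p + 1) g (i + 1)) = Set.univ := by
      refine T.outDigits_eq_univ hd hne ?_
      have hrepeat : g (i + 1 + (p + 1)) = g (i + 1 + p) := (hg _ (by omega)).trans hlast.symm
      rw [window_succ_eq_snoc, hrepeat] at hused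
      exact hused
    rw [window_succ_eq_cons]
    exact Set.eq_univ_iff_forall.1 (T.inDigits_eq_univ hout) (g i)
  · have htail : window (p + 1) g (e + 1) = fun _ => a :=
      window_eq_const_iff.2 fun k _ => hg _ (by omega)
    rw [window_succ_eq_cons, htail]
    exact ha _ hge

theorem mem_outDigits_of_forall_mem_inDigits (T : MaximalTrail d p M f)
    (hd : ∀ x, x ∈ AddSubmonoid.multiples d) {a : A}
    (ha : ∀ x ≠ a, x ∈ inDigits f M (fun _ : Fin (p + 1) => a)) {v : Fin (p + 1) → A}
    (hv : v ≠ fun _ => a) : a ∈ outDigits f M v := by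
  let g : ℕ → A := fun k => if hk : k < p + 1 then v ⟨k, hk⟩ else a
  have hgv : window (p + 1) g 0 = v := by
    ext k
    simp only [window, g, Nat.zero_add, k.is_lt, dif_pos]
  obtain ⟨k, hk⟩ : ∃ k, g k ≠ a := by
    by_contra! hconst
    exact hv (hgv ▸ window_eq_const_iff.2 fun k _ => hconst _)
  have hbound : p ∈ upperBounds {k | g k ≠ a} := fun k hk => by
    by_contra hkp
    exact hk (dif_neg (by omega))
  obtain ⟨e, hge, hmax⟩ := BddAbove.exists_isGreatest_of_nonempty ⟨p, hbound⟩
    (⟨k, hk⟩ : {k | g k ≠ a}.Nonempty)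
  have hused := T.used_window_of_eventually_const hd ha hge
    (fun k hk => not_not.1 fun h => hk.not_ge (hmax h)) (hbound hge)
  have hga : g (0 + (p + 1)) = a := dif_neg (by omega)
  rwa [window_succ_eq_snoc, hgv, hga] at hused

theorem mem_inDigits_const_of_sub_mem (T : MaximalTrail d p M f)
    (hd : ∀ x, x ∈ AddSubmonoid.multiples d) {a : A} (ha : a ≠ 0)
    (hout : a - d ∈ outDigits f M (fun _ : Fin (p + 1) => a)) {x : A} (hx : x ≠ a) :
    x ∈ inDigits f M (fun _ : Fin (p + 1) => a) := by
  have hsub_out : ({a}ᶜ : Set A) ⊆ outDigits f M (fun _ : Fin (p + 1) => a) := fun _ hc =>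
    T.mem_outDigits_of_last_sub_mem hd (fun h => ha (congrFun h 0)) hout hc
  have hin_sub : inDigits f M (fun _ : Fin (p + 1) => a) ⊆ {a}ᶜ := by
    rintro x hused rfl
    have hcons : Fin.cons x (fun _ : Fin (p + 1) => x) = fun _ : Fin (p + 2) => x := by
      ext k
      cases k using Fin.cases <;> rfl
    exact T.not_used_const hd ha (hcons ▸ hused)
  have hcard := Set.ncard_le_ncard hsub_out
  rw [T.ncard_outDigits_eq] at hcard
  exact (Set.eq_of_subset_of_ncard_le hin_sub hcard).symm.subset hx

/-- For `a = 0` this holds because the end `0 ⋯ 0` of the trail is exhausted. If it holds for `a`,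
then at the vertex `(a + d) ⋯ (a + d)` the last choice but one is taken, so it holds for `a + d` by
balance. -/
theorem mem_outDigits_of_ne_const (T : MaximalTrail d p M f)
    (hd : ∀ x, x ∈ AddSubmonoid.multiples d) (a : A) {v : Fin (p + 1) → A}
    (hv : v ≠ fun _ => a) : a ∈ outDigits f M v := by
  have hin_zero : ∀ x, x ∈ inDigits f M (0 : Fin (p + 1) → A) :=
    Set.eq_univ_iff_forall.1 (T.inDigits_eq_univ (T.window_eq_zero ▸ T.outDigits_window))
  obtain ⟨r, rfl⟩ := (AddSubmonoid.mem_multiples_iff _ _).1 (hd a)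
  induction r generalizing v with
  | zero =>
    rw [zero_nsmul] at hv ⊢
    exact T.mem_outDigits_of_forall_mem_inDigits hd (fun x _ => hin_zero x) hv
  | succ r ih =>
    by_cases hzero : (r + 1) • d = 0
    · rw [hzero] at hv ⊢
      exact T.mem_outDigits_of_forall_mem_inDigits hd (fun x _ => hin_zero x) hv
    have hd0 : d ≠ 0 := ne_zero_of_mem_multiples (hd _) hzero
    refine T.mem_outDigits_of_forall_mem_inDigits hd (fun x hx => ?_) hv
    refine T.mem_inDigits_const_of_sub_mem hd hzero ?_ hx
    rw [succ_nsmul, add_sub_cancel_right]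
    exact ih fun h => hd0 (by simpa [succ_nsmul] using congrFun h 0)

theorem exists_isLastVisit (T : MaximalTrail d p M f)
    (hd : ∀ x, x ∈ AddSubmonoid.multiples d) (a : A) : ∃ t, IsLastVisit f p M a t := by
  by_cases ha : a = 0
  · exact IsLastVisit.exists_of_apply_eq le_rfl
      ((congrFun T.window_eq_zero (Fin.last p)).trans ha.symm)
  · obtain ⟨i, hi, -, hia⟩ := mem_outDigits.1 <|
      T.mem_outDigits_of_ne_const hd a (v := 0) fun h => ha (congrFun h 0).symm
    exact IsLastVisit.exists_of_apply_eq (i := i + 1) hi ((congrArg f (by omega)).trans hia)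

variable {a : A} {t : ℕ}

theorem window_eq_of_isLastVisit (T : MaximalTrail d p M f)
    (hd : ∀ x, x ∈ AddSubmonoid.multiples d) (ht : IsLastVisit f p M a t) :
    window (p + 1) f t = fun _ => a := by
  by_contra hne
  obtain ⟨⟨htM, hta⟩, hmax⟩ := ht
  have hne_zero : window (p + 1) f t ≠ 0 := fun h => hne (by
    rw [← hta, window_eq_const_iff.1 h p p.lt_succ_self]; exact h)
  have htM := T.lt_of_window_ne_zero htM hne_zero
  obtain ⟨j, hj, hw, hja⟩ := mem_outDigits.1 (T.mem_outDigits_of_ne_const hd a hne)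
  have hjp : f (j + p) = a := (congrFun hw (Fin.last p)).trans hta
  have htj := T.le_of_window_eq hd htM hj (hw ▸ hne_zero) (hja.trans hjp.symm) hw.symm
  have := hmax ⟨hj, (congrArg f (by omega)).trans hja⟩
  omega

theorem apply_succ_of_isLastVisit (T : MaximalTrail d p M f)
    (hd : ∀ x, x ∈ AddSubmonoid.multiples d) (ht : IsLastVisit f p M a t) (ha : a ≠ 0) :
    f (t + p + 1) = a - d := by
  have hw := T.window_eq_of_isLastVisit hd ht
  obtain ⟨⟨htM, -⟩, hmax⟩ := ht
  have hconst : (fun _ : Fin (p + 1) => a) ≠ 0 := fun h => ha (congrFun h 0)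
  have htM := T.lt_of_window_ne_zero htM (hw ▸ hconst)
  have hta' : f (t + p + 1) ≠ a := fun h => by
    have := hmax ⟨htM, (congrArg f (by omega)).trans h⟩
    omega
  obtain ⟨s, hs, hsw, hsd⟩ := mem_outDigits.1 <| T.mem_outDigits_of_ne_const hd (a - d)
    (v := fun _ : Fin (p + 1) => a) fun h =>
      ne_zero_of_mem_multiples (hd a) ha (sub_eq_self.1 (congrFun h 0).symm)
  have hst : s ≤ t := hmax ⟨hs.le, congrFun hsw (Fin.last p)⟩
  have hts : t < s + 1 := T.lt_of_mem_outDigits htM hs <| hw ▸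
    (T.mono hs).mem_outDigits_of_last_sub_mem hd hconst
      (mem_outDigits.2 ⟨s, s.lt_succ_self, hsw, hsd⟩) hta'
  rwa [show t = s by omega]

/-- Otherwise the next choice `a` would be taken later at the vertex of time `s`. -/
theorem apply_eq_of_apply_succ_eq (T : MaximalTrail d p M f)
    (hd : ∀ x, x ∈ AddSubmonoid.multiples d) (ht : IsLastVisit f p M a t) (ha : a ≠ 0) {s : ℕ}
    (hts : t < s) (hs : s < M) (hsd : f (s + p + 1) = a - d) : f (s + p) = a - d := by
  by_contra hne
  have hsa : window (p + 1) f s ≠ fun _ => a := fun h =>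
    hts.not_ge (ht.2 ⟨hs.le, window_eq_const_iff.1 h p p.lt_succ_self⟩)
  obtain ⟨j, hj, hw, hja⟩ := mem_outDigits.1 (T.mem_outDigits_of_ne_const hd a hsa)
  have hj0 : j ≠ 0 := by
    rintro rfl
    exact ha (hja.symm.trans (T.apply_eq_zero (by omega)))
  have hjs : f (j + p) = f (s + p) := congrFun hw (Fin.last p)
  have hmem : a - d ∈ outDigits f j (window (p + 1) f j) :=
    T.greedy j (Nat.pos_of_ne_zero hj0) hj (a - d) (hjs ▸ Ne.symm hne)
      (hja.trans (sub_add_cancel a d).symm)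
  have hsj : s < j := T.lt_of_mem_outDigits hs hj.le (by rwa [hsd, ← hw])
  have hjt : j + 1 ≤ t := ht.2 ⟨hj, (congrArg f (by omega)).trans hja⟩
  omega

theorem isLastVisit_sub (T : MaximalTrail d p M f)
    (hd : ∀ x, x ∈ AddSubmonoid.multiples d) (ht : IsLastVisit f p M a t) (ha : a ≠ 0) :
    IsLastVisit f p M (a - d) (t + p + 1) := by
  have htM : t < M := T.lt_of_window_ne_zero ht.1.1 fun h =>
    ha (ht.1.2.symm.trans (congrFun h (Fin.last p)))
  have hsucc : f (t + 1 + p) = a - d := by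
    rw [Nat.add_right_comm, T.apply_succ_of_isLastVisit hd ht ha]
  obtain ⟨u, hu⟩ := IsLastVisit.exists_of_apply_eq htM hsucc
  have htu : t + 1 ≤ u := hu.2 ⟨htM, hsucc⟩
  have hrun : ∀ k, t + 1 ≤ k → k ≤ u → f (k + p) = a - d := fun k htk hku =>
    Nat.decreasingInduction' (P := fun k => f (k + p) = a - d)
      (fun j hju hkj hj => T.apply_eq_of_apply_succ_eq hd ht ha (htk.trans hkj)
        (hju.trans_le hu.1.1) ((congrArg f (by omega)).trans hj)) hku hu.1.2
  have hlower : t + p + 1 ≤ u := by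
    by_contra! hlt
    have := window_eq_const_iff.1 (T.window_eq_of_isLastVisit hd hu) (t + p - u) (by omega)
    rw [show u + (t + p - u) = t + p by omega, ht.1.2] at this
    exact ne_zero_of_mem_multiples (hd a) ha (sub_eq_self.1 this.symm)
  have hupper : u ≤ t + p + 1 := by
    by_contra! hlt
    have huM := hu.1.1
    have hw : window (p + 2) f (u - 1) = fun _ => a - d := window_eq_const_iff.2 fun k hk => by
      rw [show u - 1 + k = u - 1 + k - p + p by omega]
      exact hrun _ (by omega) (by omega)
    have := T.eq_zero_of_window_eq_const hd (by omega) hw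
    omega
  rwa [← le_antisymm hupper hlower]

theorem exists_forall_window_eq_neg_nsmul (T : MaximalTrail d p M f)
    (hd : ∀ x, x ∈ AddSubmonoid.multiples d) :
    ∃ t, t + addOrderOf d * (p + 1) = M + (p + 1) ∧
      ∀ i < addOrderOf d, window (p + 1) f (t + i * (p + 1)) = fun _ => -((i + 1) • d) := by
  obtain ⟨t, ht⟩ := T.exists_isLastVisit hd (-d)
  have hchain : ∀ i < addOrderOf d, IsLastVisit f p M (-((i + 1) • d)) (t + i * (p + 1)) := by
    intro i hi
    induction i with
    | zero => simpa using ht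
    | succ i ih =>
      have hne : -((i + 1) • d) ≠ 0 :=
        neg_ne_zero.2 (nsmul_ne_zero_of_lt_addOrderOf i.succ_ne_zero hi)
      convert T.isLastVisit_sub hd (ih (by omega)) hne using 1
      · rw [succ_nsmul, neg_add']
      · ring
  obtain ⟨r, hr⟩ := Nat.exists_eq_add_one.2 (addOrderOf_pos d)
  have hlast := hchain r (by omega)
  rw [← hr, addOrderOf_nsmul_eq_zero, neg_zero] at hlast
  have hend : t + r * (p + 1) = M :=
    le_antisymm hlast.1.1 (hlast.2 ⟨le_rfl, congrFun T.window_eq_zero (Fin.last p)⟩)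
  exact ⟨t, by rw [hr, ← hend]; ring, fun i hi => T.window_eq_of_isLastVisit hd (hchain i hi)⟩

end MaximalTrail

end Trails

section Lists

variable {α : Type*} {m j : ℕ} {x₀ : α} {l : List α}

theorem take_drop_eq_ofFn_window (h : j + m ≤ l.length) :
    (l.drop j).take m = List.ofFn (window m (l.getD · x₀) j) := by
  have hlen : ((l.drop j).take m).length = m :=
    List.length_take_of_le (by rw [List.length_drop]; omega)
  refine List.ext_getElem (by rw [hlen, List.length_ofFn]) fun k hk _ => ?_
  have hkl : j + k < l.length := by omega
  simp [window, hkl]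

theorem lastN_take_add (h : j + m ≤ l.length) : lastN m (l.take (j + m)) = (l.drop j).take m := by
  rw [lastN, List.length_take_of_le h, Nat.add_sub_cancel, List.drop_take, Nat.add_sub_cancel_left]

theorem ofFn_infix_take_iff {e : Fin (m + 1) → α} (h : j + m ≤ l.length) :
    List.ofFn e <:+: l.take (j + m) ↔ Used (l.getD · x₀) j e := by
  rw [List.infix_iff_getElem?]
  simp only [List.length_ofFn, List.length_take_of_le h, List.getElem_ofFn]
  refine exists_congr fun i => ?_
  rw [show m + 1 + i ≤ j + m ↔ i < j by omega, funext_iff, Fin.forall_iff]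
  refine and_congr_right fun hij => forall₂_congr fun k hk => ?_
  have hkl : k + i < l.length := by omega
  simp [window, List.getElem?_take_of_lt (show k + i < j + m by omega), Nat.add_comm i k, hkl]

theorem lastN_append_infix_take_iff {c : α} (h : j + m ≤ l.length) :
    lastN m (l.take (j + m)) ++ [c] <:+: l.take (j + m) ↔
      c ∈ outDigits (l.getD · x₀) j (window m (l.getD · x₀) j) := by
  rw [outDigits, Set.mem_ofPred_eq, ← ofFn_infix_take_iff h, List.ofFn_succ', List.concat_eq_append,
    lastN_take_add h, take_drop_eq_ofFn_window (x₀ := x₀) h]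
  simp only [Fin.snoc_castSucc, Fin.snoc_last]

theorem flatten_replicate_suffix_take {g : ℕ → α} {t N : ℕ} (hN : t + N * m ≤ l.length)
    (h : ∀ i < N, window m (l.getD · x₀) (t + i * m) = fun _ => g i) :
    ((List.range N).map fun i => List.replicate m (g i)).flatten <:+ l.take (t + N * m) := by
  induction N with
  | zero => exact List.nil_suffix
  | succ N ih =>
    rw [Nat.succ_mul, ← Nat.add_assoc] at hN ⊢
    rw [List.take_add, take_drop_eq_ofFn_window (x₀ := x₀) hN, h N N.lt_succ_self, List.ofFn_const,
      List.range_succ, List.map_append, List.flatten_append, List.map_singleton,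
      List.flatten_singleton, List.suffix_append_self_iff]
    exact ih (by omega) fun i hi => h i (hi.trans N.lt_succ_self)

end Lists

section Greedy

variable {q s n F k : ℕ} {P : List (ZMod q) → Fin q → ZMod q} {l : List (ZMod q)}

theorem prefix_greedyAux (q s n : ℕ) (P : List (ZMod q) → Fin q → ZMod q) (F : ℕ)
    (l : List (ZMod q)) : l <+: greedyAux q s n P F l := by
  induction F generalizing l with
  | zero => exact List.prefix_refl l
  | succ F ih =>
    rw [greedyAux]
    split
    · exact List.prefix_refl l
    · exact (List.prefix_append l _).trans (ih _)

theorem length_greedyAux_le (q s n : ℕ) (P : List (ZMod q) → Fin q → ZMod q) (F : ℕ)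
    (l : List (ZMod q)) : (greedyAux q s n P F l).length ≤ l.length + F := by
  induction F generalizing l with
  | zero => exact le_rfl
  | succ F ih =>
    rw [greedyAux]
    split
    · exact Nat.le_add_right _ _
    · refine (ih _).trans_eq ?_
      rw [List.length_append, List.length_singleton]
      ring

/-- At `k = (greedyAux q s n P F l).length` this says that the construction has halted. -/
theorem nextDigit_take_greedyAux (hlk : l.length ≤ k) (hkF : k < l.length + F) :
    nextDigit q s n P ((greedyAux q s n P F l).take k) = (greedyAux q s n P F l)[k]? := by
  induction F generalizing l with
  | zero => omega
  | succ F ih =>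
    cases hnext : nextDigit q s n P l with
    | none =>
      simp only [greedyAux, hnext]
      rw [List.take_of_length_le hlk, hnext, List.getElem?_eq_none hlk]
    | some c =>
      simp only [greedyAux, hnext]
      rcases hlk.eq_or_lt with rfl | hlt
      · have hpre := prefix_greedyAux q s n P F (l ++ [c])
        rw [← List.prefix_iff_eq_take.1 ((List.prefix_append l [c]).trans hpre), hnext,
          List.prefix_iff_getElem?.1 hpre l.length (by simp), List.getElem_concat_length rfl]
      · exact ih (by simpa using hlt) (by rw [List.length_append, List.length_singleton]; omega)

end Greedy

section PreferOpposite

variable {q d p j : ℕ} {l : List (ZMod q)} {b c : ZMod q}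

theorem OprefL_lastN_take (h : j + (p + 1) ≤ l.length) (i : Fin q) :
    OprefL q d (lastN 1 (l.take (j + (p + 1)))) i =
      l.getD (j + p) 0 + ((i : ℕ) + 1) • (d : ZMod q) := by
  rw [← Nat.add_assoc] at h ⊢
  rw [lastN_take_add h, take_drop_eq_ofFn_window (x₀ := 0) h, OprefL, nsmul_eq_mul]
  simp [window]

theorem notMem_outDigits_of_nextDigit_eq_some (h : j + (p + 1) ≤ l.length)
    (hnext : nextDigit q 1 (p + 2) (OprefL q d) (l.take (j + (p + 1))) = some c) :
    c ∉ outDigits (l.getD · 0) j (window (p + 1) (l.getD · 0) j) := by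
  have hc := List.find?_some hnext
  rwa [Bool.not_eq_true', decide_eq_false_iff_not, Nat.add_sub_cancel (n := p + 1) (m := 1),
    lastN_append_infix_take_iff h] at hc

theorem mem_outDigits_of_nextDigit_eq_some (h : j + (p + 1) ≤ l.length)
    (hnext : nextDigit q 1 (p + 2) (OprefL q d) (l.take (j + (p + 1))) = some (b + d))
    (hb : b ≠ l.getD (j + p) 0) :
    b ∈ outDigits (l.getD · 0) j (window (p + 1) (l.getD · 0) j) := by
  obtain ⟨-, i, hi, hbi, hbefore⟩ := List.find?_eq_some_iff_getElem.1 hnext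
  rw [List.getElem_map, OprefL_lastN_take h, List.getElem_finRange, succ_nsmul, ← add_assoc,
    add_right_cancel_iff] at hbi
  obtain _ | i := i
  · exact absurd (by simpa using hbi.symm) hb
  have hused := hbefore i i.lt_succ_self
  rw [List.getElem_map, OprefL_lastN_take h, Bool.not_not, decide_eq_true_eq, List.getElem_finRange,
    Nat.add_sub_cancel (n := p + 1) (m := 1), lastN_append_infix_take_iff h] at hused
  exact hbi ▸ hused

theorem outDigits_eq_univ_of_nextDigit_eq_none [NeZero q] (h : j + (p + 1) ≤ l.length)
    (hd : ∀ x, x ∈ AddSubmonoid.multiples (d : ZMod q))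
    (hnext : nextDigit q 1 (p + 2) (OprefL q d) (l.take (j + (p + 1))) = none) :
    outDigits (l.getD · 0) j (window (p + 1) (l.getD · 0) j) = Set.univ := by
  refine Set.eq_univ_of_forall fun c => ?_
  obtain ⟨r, hr⟩ := (AddSubmonoid.mem_multiples_iff _ _).1 (hd (c - l.getD (j + p) 0 - d))
  have hmem : c ∈ (List.finRange q).map
      fun i => OprefL q d (lastN 1 (l.take (j + (p + 1)))) i := by
    refine List.mem_map.2 ⟨⟨r % q, Nat.mod_lt r (NeZero.pos q)⟩, List.mem_finRange _, ?_⟩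
    rw [OprefL_lastN_take h, succ_nsmul, nsmul_eq_mul, ZMod.natCast_mod, ← nsmul_eq_mul, hr]
    abel
  have hused := List.find?_eq_none.1 hnext c hmem
  rwa [Bool.not_eq_true', decide_eq_false_iff_not, not_not,
    Nat.add_sub_cancel (n := p + 1) (m := 1), lastN_append_infix_take_iff h] at hused

theorem greedyTrail_of_nextDigit {M : ℕ} (hM : M + (p + 1) = l.length)
    (hzero : List.replicate (p + 2) 0 <+: l)
    (hnext : ∀ j, 0 < j → j < M → nextDigit q 1 (p + 2) (OprefL q d) (l.take (j + (p + 1))) =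
      some (l.getD (j + (p + 1)) 0)) :
    GreedyTrail (d : ZMod q) p M (l.getD · 0) where
  window_zero := window_eq_const_iff.2 fun k hk => by
    rw [Nat.zero_add, List.getD_eq_getElem?_getD,
      List.prefix_iff_getElem?.1 hzero k (by simpa using hk), List.getElem_replicate,
      Option.getD_some]
    rfl
  injOn := by
    intro i hi j hj hw
    by_contra hne
    wlog hij : i < j generalizing i j
    · exact this hj hi hw.symm (Ne.symm hne) (by omega)
    refine notMem_outDigits_of_nextDigit_eq_some (hM ▸ Nat.add_le_add_right (le_of_lt hj) _)
      (hnext j (by omega) hj) ?_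
    exact mem_outDigits.2 ⟨i, hij, window_succ_eq_window_succ_iff.1 hw⟩
  greedy i hi hiM b hb hbd := by
    have hnext := hnext i hi hiM
    rw [← Nat.add_assoc, hbd] at hnext
    exact mem_outDigits_of_nextDigit_eq_some (hM ▸ Nat.add_le_add_right hiM.le _) hnext hb

theorem exists_maximalTrail_oSeq [NeZero q] (hd : ∀ x, x ∈ AddSubmonoid.multiples (d : ZMod q))
    (p : ℕ) : ∃ M, M + (p + 1) = (oSeq q (p + 2) d).length ∧
      MaximalTrail (d : ZMod q) p M ((oSeq q (p + 2) d).getD · 0) := by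
  have hzero : List.replicate (p + 2) 0 <+: oSeq q (p + 2) d := prefix_greedyAux ..
  have hlen : (oSeq q (p + 2) d).length ≤ p + 2 + q ^ (p + 2) :=
    (length_greedyAux_le ..).trans_eq (by rw [List.length_replicate])
  have hnext : ∀ j, 0 < j → j + (p + 1) < p + 2 + q ^ (p + 2) →
      nextDigit q 1 (p + 2) (OprefL q d) ((oSeq q (p + 2) d).take (j + (p + 1))) =
        (oSeq q (p + 2) d)[j + (p + 1)]? := fun j hj hjF =>
    nextDigit_take_greedyAux (by rw [List.length_replicate]; omega) (by simpa using hjF)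
  obtain ⟨M, hM⟩ := Nat.exists_eq_add_of_le' (hzero.length_le)
  rw [List.length_replicate] at hM
  have T : GreedyTrail (d : ZMod q) p (M + 1) ((oSeq q (p + 2) d).getD · 0) := by
    refine greedyTrail_of_nextDigit (by omega) hzero fun j hj hjM => ?_
    rw [hnext j hj (by omega), List.getD_eq_getElem _ _ (by omega), List.getElem?_eq_getElem]
  have hMcard := T.le_card_pow
  rw [Nat.card_zmod] at hMcard
  refine ⟨M + 1, by omega, T, outDigits_eq_univ_of_nextDigit_eq_none (by omega) hd ?_⟩
  rw [hnext (M + 1) M.succ_pos (by omega), List.getElem?_eq_none (by omega)]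

end PreferOpposite

section ZMod

variable {q d : ℕ}

theorem mem_multiples_of_coprime [NeZero q] (hd : d.Coprime q) (x : ZMod q) :
    x ∈ AddSubmonoid.multiples (d : ZMod q) := by
  refine (AddSubmonoid.mem_multiples_iff _ _).2 ⟨(x * (d : ZMod q)⁻¹).val, ?_⟩
  rw [nsmul_eq_mul, ZMod.natCast_zmod_val, mul_assoc,
    ZMod.inv_mul_of_unit _ ((ZMod.isUnit_iff_coprime d q).2 hd), mul_one]

theorem addOrderOf_natCast_of_coprime [NeZero q] (hd : d.Coprime q) :
    addOrderOf (d : ZMod q) = q := by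
  rw [ZMod.addOrderOf_coe d (NeZero.ne q), hd.symm.gcd_eq_one, Nat.div_one]

theorem natCast_succ_mul_pred_mul (hq : 1 ≤ q) (d i : ℕ) :
    (((i + 1) * (q - 1) * d : ℕ) : ZMod q) = -((i + 1) • (d : ZMod q)) := by
  rw [nsmul_eq_mul]
  push_cast [Nat.cast_sub hq, ZMod.natCast_self]
  ring

end ZMod

/-- Set `σ_{q-1-i} = i·(q-1)·d (mod q)` for `i = 1,…,q-1`.
The digits `σ_0,…,σ_{q-2}` are nonzero and pairwise distinct (hence a
rearrangement of `1,…,q-1`), and `o_n` terminates with the suffix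
`σ_{q-2}^{n-1} σ_{q-3}^{n-1} ⋯ σ_0^{n-1} 0^{n-1}`; in the suffix below the
block for `i = 0,…,q-1` is `((i+1)·(q-1)·d mod q)` repeated `n-1` times, the
last block (`i = q-1`) being `0^{n-1}`. -/
theorem oSeq_suffix (q n d : ℕ) (hq : 2 ≤ q) (hn : 2 ≤ n)
    (hd : Nat.Coprime d q) :
    (∀ i, i < q - 1 → (((i + 1) * (q - 1) * d : ℕ) : ZMod q) ≠ 0) ∧
    (∀ i j, i < q - 1 → j < q - 1 →
      (((i + 1) * (q - 1) * d : ℕ) : ZMod q) =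
        (((j + 1) * (q - 1) * d : ℕ) : ZMod q) → i = j) ∧
    ((List.range q).map fun i =>
        List.replicate (n - 1) (((i + 1) * (q - 1) * d : ℕ) : ZMod q)).flatten
      <:+ oSeq q n d := by
  obtain ⟨p, rfl⟩ := Nat.exists_eq_add_of_le' hn
  have : NeZero q := ⟨by omega⟩
  have hgen := mem_multiples_of_coprime hd
  have horder := addOrderOf_natCast_of_coprime hd
  simp only [natCast_succ_mul_pred_mul (show 1 ≤ q by omega)]
  refine ⟨fun i hi => ?_, fun i j hi hj hij => ?_, ?_⟩
  · exact neg_ne_zero.2 (nsmul_ne_zero_of_lt_addOrderOf i.succ_ne_zero (by omega))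
  · exact Nat.succ_injective <| nsmul_injOn_Iio_addOrderOf
      (show i + 1 < addOrderOf (d : ZMod q) by omega)
      (show j + 1 < addOrderOf (d : ZMod q) by omega) (neg_injective hij)
  · obtain ⟨M, hM, T⟩ := exists_maximalTrail_oSeq hgen p
    obtain ⟨t, ht, hblock⟩ := T.exists_forall_window_eq_neg_nsmul hgen
    rw [horder] at ht hblock
    have hsuffix := flatten_replicate_suffix_take (ht.trans hM).le hblock
    rwa [ht, hM, List.take_length] at hsuffix

end PaperDB
end
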